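/- Let λ ∈ (0,1). There exists a constant C_λ ∈ ℝ such that, as x → ∞, g_λ(x) = −2/x + (2 log x + C_λ)/x² + o(1/x²) and g_λ'(x) = 2/x² − (4 log x + 2 C_λ − 2)/x³ + o(1/x³). -/

import Mathlib

open Set Filter

/-- First derivative on `[0,∞)` (derivative within `Set.Ici 0`). -/
noncomputable def derIci (g : ℝ → ℝ) : ℝ → ℝ := fun x => derivWithin g (Set.Ici 0) x

/-- Second derivative on `[0,∞)`. -/
noncomputable def derIci2 (g : ℝ → ℝ) : ℝ → ℝ := fun x => derivWithin (derIci g) (Set.Ici 0) x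

/-- `g : [0,∞) → ℝ` is a twice differentiable solution of `g'' + 2 g' = g²`
with `g(0) = 0` and `g'(0) = -λ`. -/
def IsGSol (lam : ℝ) (g : ℝ → ℝ) : Prop :=
  DifferentiableOn ℝ g (Set.Ici 0) ∧
  DifferentiableOn ℝ (derIci g) (Set.Ici 0) ∧
  (∀ x ∈ Set.Ici (0 : ℝ), derIci2 g x + 2 * derIci g x = (g x) ^ 2) ∧
  g 0 = 0 ∧ derIci g 0 = -lam

open Asymptotics

/-!
The function `w = -1 / g` turns `g'' + 2 g' = g ^ 2` into `w'' + 2 w' = 1 + 2 w' ^ 2 / w`.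
If `w' / w` stays below some `θ < 1`, the rate `r = w'` relaxes to `1 / 2`, so `w ~ x / 2`, and then
`w (r - 1 / 2)` relaxes to `1 / 4`. The derivative of `w + r / 2 - x / 2 - log w / 2` is
`r (r - 1 / 2) / w = O(x⁻²)`, so this function converges, which gives
`w = x / 2 + log x / 2 + K + o(1)` and the expansions with `C = 4 K`.

For the initial data `g 0 = 0`, `g' 0 = -λ`, the function `g' + 2 g` is nondecreasing, whence
`g > -λ / 2`; this confinement keeps `g` negative on `(0, ∞)` and gives `w' / w = -g' / g < λ / 2`.
-/

open Topology MeasureTheory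

section Comparison

theorem mul_exp_le_of_mul_le_hasDerivWithinAt {y y' : ℝ → ℝ} {a c x : ℝ}
    (hy : ∀ t ∈ Ici a, HasDerivWithinAt y (y' t) (Ici a) t)
    (hle : ∀ t ∈ Ici a, c * y t ≤ y' t) (hx : a ≤ x) :
    y a * Real.exp (c * (x - a)) ≤ y x := by
  have hgronwall := le_gronwallBound_of_liminf_deriv_right_le
    (f := fun t => -y t) (f' := fun t => -y' t) (δ := -y a) (K := c) (ε := 0) (b := x)
    (fun t ht => ((hy t ht.1).neg.mono Icc_subset_Ici_self).continuousWithinAt)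
    (fun t ht _ hr =>
      ((hy t ht.1).neg.mono (Ici_subset_Ici.2 ht.1)).liminf_right_slope_le hr)
    le_rfl (fun t ht => by linarith [hle t ht.1]) x (right_mem_Icc.2 hx)
  rw [gronwallBound_ε0] at hgronwall
  linarith

variable {y y' f : ℝ → ℝ} {a b c l : ℝ}

theorem eventually_lt_of_hasDerivAt_le_mul_sub (hc : 0 < c) (hab : a < b)
    (hy : ∀ᶠ x in atTop, HasDerivAt y (y' x) x) (hle : ∀ᶠ x in atTop, y' x ≤ c * (a - y x)) :
    ∀ᶠ x in atTop, y x < b := by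
  obtain ⟨X, hX⟩ := eventually_atTop.1 (hy.and hle)
  have hdecay : Tendsto (fun x => (a - y X) * Real.exp (-c * (x - X))) atTop (𝓝 0) := by
    have hlin : Tendsto (fun x => -c * (x - X)) atTop atBot :=
      (tendsto_atTop_add_const_right _ (-X) tendsto_id).const_mul_atTop_of_neg (neg_lt_zero.2 hc)
    simpa using (Real.tendsto_exp_atBot.comp hlin).const_mul (a - y X)
  filter_upwards [hdecay.eventually_const_lt (sub_neg.2 hab), eventually_ge_atTop X] with x hlt hx
  have hcmp : (a - y X) * Real.exp (-c * (x - X)) ≤ a - y x :=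
    mul_exp_le_of_mul_le_hasDerivWithinAt (y := fun t => a - y t)
      (fun t ht => ((hX t ht).1.const_sub a).hasDerivWithinAt)
      (fun t ht => by linarith [(hX t ht).2]) hx
  linarith

theorem eventually_gt_of_mul_sub_le_hasDerivAt (hc : 0 < c) (hba : b < a)
    (hy : ∀ᶠ x in atTop, HasDerivAt y (y' x) x) (hle : ∀ᶠ x in atTop, c * (a - y x) ≤ y' x) :
    ∀ᶠ x in atTop, b < y x := by
  have hneg := eventually_lt_of_hasDerivAt_le_mul_sub hc (neg_lt_neg hba)
    (hy.mono fun x hx => hx.neg) (hle.mono fun x hx => by simp only [Pi.neg_apply]; linarith)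
  exact hneg.mono fun x hx => neg_lt_neg_iff.1 hx

theorem tendsto_of_hasDerivAt_sub_mul (hc : 0 < c)
    (hy : ∀ᶠ x in atTop, HasDerivAt y (f x - c * y x) x) (hf : Tendsto f atTop (𝓝 l)) :
    Tendsto y atTop (𝓝 (l / c)) := by
  refine tendsto_order.2 ⟨fun b hb => ?_, fun b hb => ?_⟩
  · obtain ⟨m, hbm, hml⟩ := exists_between hb
    refine eventually_gt_of_mul_sub_le_hasDerivAt hc hbm hy ?_
    filter_upwards [hf.eventually_const_lt ((lt_div_iff₀' hc).1 hml)] with x hx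
    linarith
  · obtain ⟨m, hlm, hmb⟩ := exists_between hb
    refine eventually_lt_of_hasDerivAt_le_mul_sub hc hmb hy ?_
    filter_upwards [hf.eventually_lt_const ((div_lt_iff₀' hc).1 hlm)] with x hx
    linarith

end Comparison

section Growth

variable {f f' : ℝ → ℝ} {b m l : ℝ}

theorem eventually_mul_lt_of_lt_hasDerivAt (hf : ∀ᶠ x in atTop, HasDerivAt f (f' x) x)
    (hm : ∀ᶠ x in atTop, m < f' x) (hbm : b < m) : ∀ᶠ x in atTop, b * x < f x := by
  obtain ⟨X, hX⟩ := eventually_atTop.1 (hf.and hm)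
  have hgap : Tendsto (fun x => (m - b) * x) atTop atTop :=
    tendsto_id.const_mul_atTop (sub_pos.2 hbm)
  filter_upwards [hgap.eventually_gt_atTop (m * X - f X), eventually_ge_atTop X] with x hgt hx
  have hcmp := mul_exp_le_of_mul_le_hasDerivWithinAt (y := fun t => f t - m * t) (c := 0)
    (fun t ht => ((hX t ht).1.sub ((hasDerivAt_id t).const_mul m)).hasDerivWithinAt)
    (fun t ht => by linarith [(hX t ht).2]) hx
  simp only [zero_mul, Real.exp_zero, mul_one] at hcmp
  linarith

theorem tendsto_div_id_of_tendsto_hasDerivAt (hf : ∀ᶠ x in atTop, HasDerivAt f (f' x) x)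
    (hl : Tendsto f' atTop (𝓝 l)) : Tendsto (fun x => f x / x) atTop (𝓝 l) := by
  refine tendsto_order.2 ⟨fun b hb => ?_, fun b hb => ?_⟩
  · obtain ⟨m, hbm, hml⟩ := exists_between hb
    filter_upwards [eventually_mul_lt_of_lt_hasDerivAt hf (hl.eventually_const_lt hml) hbm,
      eventually_gt_atTop 0] with x hx hx0
    exact (lt_div_iff₀ hx0).2 hx
  · obtain ⟨m, hlm, hmb⟩ := exists_between hb
    have hneg : ∀ᶠ x in atTop, -m < -f' x :=
      (hl.eventually_lt_const hlm).mono fun x hx => neg_lt_neg hx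
    filter_upwards [eventually_mul_lt_of_lt_hasDerivAt (hf.mono fun x hx => hx.neg) hneg
      (neg_lt_neg hmb), eventually_gt_atTop 0] with x hx hx0
    rw [Pi.neg_apply, neg_mul, neg_lt_neg_iff] at hx
    exact (div_lt_iff₀ hx0).2 hx

theorem exists_tendsto_of_hasDerivAt_isBigO {E : Type*} [NormedAddCommGroup E] [NormedSpace ℝ E]
    [CompleteSpace E] {f f' : ℝ → E} {φ : ℝ → ℝ} (hf : ∀ᶠ x in atTop, HasDerivAt f (f' x) x)
    (hO : f' =O[atTop] φ) (hφ : IntegrableAtFilter φ atTop) : ∃ L, Tendsto f atTop (𝓝 L) := by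
  have hderiv : deriv f =ᶠ[atTop] f' := hf.mono fun x hx => hx.deriv
  have hint : IntegrableAtFilter (deriv f) atTop :=
    (hderiv.trans_isBigO hO).integrableAtFilter
      (aestronglyMeasurable_deriv f volume).stronglyMeasurableAtFilter hφ
  obtain ⟨s, hs, hsint⟩ := hint
  obtain ⟨X, hX⟩ := eventually_atTop.1 (hf.and hs)
  exact ⟨_, tendsto_limUnder_of_hasDerivAt_of_integrableOn_Ioi
    (fun x hx => (hX x (mem_Ioi.1 hx).le).1.differentiableAt.hasDerivAt)
    (hsint.mono_set fun x hx => (hX x (mem_Ioi.1 hx).le).2)⟩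

end Growth

/-- The first-order system satisfied near `+∞` by `w = -1 / g` and its rate `r = w'`, for a negative
solution `g` of `g'' + 2 g' = g ^ 2`. Since `r / w = -g' / g`, the field `slow` excludes the
solutions decaying like `exp (-2 x)`. -/
structure IsReciprocalSystem (w r : ℝ → ℝ) : Prop where
  pos : ∀ᶠ x in atTop, 0 < w x
  hasDerivAt : ∀ᶠ x in atTop, HasDerivAt w (r x) x
  hasDerivAt_rate : ∀ᶠ x in atTop, HasDerivAt r (1 - 2 * r x + 2 * r x ^ 2 / w x) x
  slow : ∃ θ < 1, ∀ᶠ x in atTop, r x ≤ θ * w x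

/-- An approximate first integral of the system: its derivative along solutions is `O(x⁻²)`, so its
limit at `+∞` determines the constant in the expansion of `w`. -/
noncomputable def approxFirstIntegral (w r : ℝ → ℝ) : ℝ → ℝ :=
  fun x => w x + r x / 2 - x / 2 - Real.log (w x) / 2

namespace IsReciprocalSystem

variable {w r : ℝ → ℝ} {K : ℝ}

theorem eventually_quarter_lt_rate (h : IsReciprocalSystem w r) : ∀ᶠ x in atTop, 1 / 4 < r x := by
  refine eventually_gt_of_mul_sub_le_hasDerivAt two_pos (a := 1 / 2) (by norm_num)
    h.hasDerivAt_rate ?_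
  filter_upwards [h.pos] with x hw
  have : 0 ≤ 2 * r x ^ 2 / w x := by positivity
  linarith

theorem exists_eventually_rate_lt (h : IsReciprocalSystem w r) :
    ∃ B, ∀ᶠ x in atTop, r x < B := by
  obtain ⟨θ, hθ, hslow⟩ := h.slow
  have hc : 0 < 2 * (1 - θ) := by linarith
  refine ⟨_, eventually_lt_of_hasDerivAt_le_mul_sub hc (lt_add_one (1 / (2 * (1 - θ))))
    h.hasDerivAt_rate ?_⟩
  filter_upwards [h.pos, h.eventually_quarter_lt_rate, hslow] with x hw hr hle
  have hquad : 2 * r x ^ 2 / w x ≤ 2 * r x * θ := by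
    rw [div_le_iff₀ hw]
    nlinarith
  rw [mul_sub, mul_one_div_cancel hc.ne']
  linarith

theorem tendsto_atTop (h : IsReciprocalSystem w r) : Tendsto w atTop atTop := by
  have hlin : Tendsto (fun x : ℝ => 1 / 8 * x) atTop atTop :=
    tendsto_id.const_mul_atTop (by norm_num)
  refine tendsto_atTop_mono' _ ?_ hlin
  exact (eventually_mul_lt_of_lt_hasDerivAt h.hasDerivAt h.eventually_quarter_lt_rate
    (by norm_num)).mono fun x hx => hx.le

theorem tendsto_rate_sq_div (h : IsReciprocalSystem w r) :
    Tendsto (fun x => r x ^ 2 / w x) atTop (𝓝 0) := by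
  obtain ⟨B, hB⟩ := h.exists_eventually_rate_lt
  refine squeeze_zero' (h.pos.mono fun x hw => by positivity) ?_
    (h.tendsto_atTop.const_div_atTop (B ^ 2))
  filter_upwards [h.pos, h.eventually_quarter_lt_rate, hB] with x hw hr hrB
  have : 0 ≤ r x := by linarith
  gcongr

theorem tendsto_rate (h : IsReciprocalSystem w r) : Tendsto r atTop (𝓝 (1 / 2)) := by
  refine tendsto_of_hasDerivAt_sub_mul two_pos (f := fun x => 1 + 2 * (r x ^ 2 / w x)) ?_ ?_
  · exact h.hasDerivAt_rate.mono fun x hx => hx.congr_deriv (by ring)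
  · simpa using (h.tendsto_rate_sq_div.const_mul 2).const_add 1

theorem tendsto_div_id (h : IsReciprocalSystem w r) :
    Tendsto (fun x => w x / x) atTop (𝓝 (1 / 2)) :=
  tendsto_div_id_of_tendsto_hasDerivAt h.hasDerivAt h.tendsto_rate

theorem tendsto_id_div (h : IsReciprocalSystem w r) :
    Tendsto (fun x => x / w x) atTop (𝓝 2) := by
  simpa using h.tendsto_div_id.inv₀ (by norm_num)

theorem tendsto_mul_rate_sub_half (h : IsReciprocalSystem w r) :
    Tendsto (fun x => w x * (r x - 1 / 2)) atTop (𝓝 (1 / 4)) := by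
  have hlim : Tendsto (fun x => r x * (r x - 1 / 2) + 2 * r x ^ 2) atTop (𝓝 (1 / 2)) := by
    have := (h.tendsto_rate.mul (h.tendsto_rate.sub_const (1 / 2))).add
      ((h.tendsto_rate.pow 2).const_mul 2)
    norm_num at this ⊢
    exact this
  have hrelax := tendsto_of_hasDerivAt_sub_mul two_pos (y := fun x => w x * (r x - 1 / 2)) ?_ hlim
  · norm_num at hrelax ⊢
    exact hrelax
  · filter_upwards [h.pos, h.hasDerivAt, h.hasDerivAt_rate] with x hw hdw hdr
    refine (hdw.mul (hdr.sub_const (1 / 2))).congr_deriv ?_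
    field_simp
    ring

theorem hasDerivAt_approxFirstIntegral (h : IsReciprocalSystem w r) :
    ∀ᶠ x in atTop, HasDerivAt (approxFirstIntegral w r) (r x * (r x - 1 / 2) / w x) x := by
  filter_upwards [h.pos, h.hasDerivAt, h.hasDerivAt_rate] with x hw hdw hdr
  refine (((hdw.add (hdr.div_const 2)).sub ((hasDerivAt_id x).div_const 2)).sub
    ((hdw.log hw.ne').div_const 2)).congr_deriv ?_
  field_simp
  ring

theorem isBigO_deriv_approxFirstIntegral (h : IsReciprocalSystem w r) :
    (fun x => r x * (r x - 1 / 2) / w x) =O[atTop] fun x : ℝ => x ^ (-2 : ℝ) := by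
  have hbdd := ((h.tendsto_rate.mul h.tendsto_mul_rate_sub_half).mul
    (h.tendsto_id_div.pow 2)).isBigO_one ℝ
  refine (hbdd.mul (isBigO_refl (fun x : ℝ => x ^ (-2 : ℝ)) atTop)).congr' ?_ (by simp)
  filter_upwards [h.pos, eventually_gt_atTop 0] with x hw hx
  rw [Real.rpow_neg hx.le, Real.rpow_two]
  field_simp

theorem exists_tendsto_sub_log (h : IsReciprocalSystem w r) :
    ∃ K, Tendsto (fun x => w x - x / 2 - Real.log x / 2) atTop (𝓝 K) := by
  obtain ⟨L, hL⟩ := exists_tendsto_of_hasDerivAt_isBigO h.hasDerivAt_approxFirstIntegral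
    h.isBigO_deriv_approxFirstIntegral (integrableAtFilter_rpow_atTop_iff.2 (by norm_num))
  have hlog : Tendsto (fun x => Real.log (w x / x)) atTop (𝓝 (Real.log (1 / 2))) :=
    h.tendsto_div_id.log (by norm_num)
  refine ⟨_, ((hL.sub (h.tendsto_rate.div_const 2)).add (hlog.div_const 2)).congr' ?_⟩
  filter_upwards [h.pos, eventually_gt_atTop 0] with x hw hx
  rw [approxFirstIntegral, Real.log_div hw.ne' hx.ne']
  ring

theorem tendsto_sub_half_sq_div (h : IsReciprocalSystem w r)
    (hK : Tendsto (fun x => w x - x / 2 - Real.log x / 2) atTop (𝓝 K)) :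
    Tendsto (fun x => (w x - x / 2) ^ 2 / w x) atTop (𝓝 0) := by
  have hlog : (fun x => w x - x / 2) =O[atTop] Real.log := by
    have hrem := (hK.isBigO_one ℝ).trans Real.isLittleO_const_log_atTop.isBigO
    refine (hrem.add ((isBigO_refl Real.log atTop).const_mul_left (1 / 2))).congr_left ?_
    intro x
    ring
  have hsq := ((hlog.pow 2).trans_isLittleO Real.isLittleO_pow_log_id_atTop).tendsto_div_nhds_zero
  have hprod := hsq.mul h.tendsto_id_div
  rw [zero_mul] at hprod
  refine hprod.congr' ?_
  filter_upwards [eventually_gt_atTop 0] with x hx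
  simp only [id]
  field_simp

theorem isLittleO_neg_one_div (h : IsReciprocalSystem w r)
    (hK : Tendsto (fun x => w x - x / 2 - Real.log x / 2) atTop (𝓝 K)) :
    (fun x => -1 / w x - (-2 / x + (2 * Real.log x + 4 * K) / x ^ 2)) =o[atTop]
      fun x => 1 / x ^ 2 := by
  refine isLittleO_of_tendsto'
    ((eventually_gt_atTop 0).mono fun x hx h0 => absurd h0 (by positivity)) ?_
  -- With `m = w - x / 2`, the scaled error is `4 (m - log x / 2 - K) - 4 m ^ 2 / w`.
  have hlim := ((hK.sub_const K).const_mul 4).sub ((h.tendsto_sub_half_sq_div hK).const_mul 4)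
  simp only [sub_self, mul_zero] at hlim
  refine hlim.congr' ?_
  filter_upwards [h.pos, eventually_gt_atTop 0] with x hw hx
  field_simp
  ring

theorem isLittleO_rate_div_sq (h : IsReciprocalSystem w r)
    (hK : Tendsto (fun x => w x - x / 2 - Real.log x / 2) atTop (𝓝 K)) :
    (fun x => r x / w x ^ 2 - (2 / x ^ 2 - (4 * Real.log x + 2 * (4 * K) - 2) / x ^ 3)) =o[atTop]
      fun x => 1 / x ^ 3 := by
  refine isLittleO_of_tendsto'
    ((eventually_gt_atTop 0).mono fun x hx h0 => absurd h0 (by positivity)) ?_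
  -- With `m = w - x / 2`, the scaled error is `(x / w) ^ 3 * (w (r - 1 / 2)) - 2`, plus
  -- `m ^ 2 / w * (8 + 2 x / w)`, minus `8 (m - log x / 2 - K)`.
  have hrate := ((h.tendsto_id_div.pow 3).mul h.tendsto_mul_rate_sub_half).sub_const 2
  have hmain := (h.tendsto_sub_half_sq_div hK).mul ((h.tendsto_id_div.const_mul 2).const_add 8)
  have hlim := (hrate.add hmain).sub ((hK.sub_const K).const_mul 8)
  norm_num at hlim
  refine hlim.congr' ?_
  filter_upwards [h.pos, eventually_gt_atTop 0] with x hw hx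
  field_simp
  ring

end IsReciprocalSystem

namespace IsGSol

variable {lam x : ℝ} {g : ℝ → ℝ}

theorem hasDerivWithinAt (hg : IsGSol lam g) (hx : x ∈ Ici 0) :
    HasDerivWithinAt g (derIci g x) (Ici 0) x :=
  (hg.1 x hx).hasDerivWithinAt

theorem hasDerivWithinAt_derIci (hg : IsGSol lam g) (hx : x ∈ Ici 0) :
    HasDerivWithinAt (derIci g) (g x ^ 2 - 2 * derIci g x) (Ici 0) x := by
  rw [← hg.2.2.1 x hx, add_sub_cancel_right]
  exact (hg.2.1 x hx).hasDerivWithinAt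

theorem apply_zero (hg : IsGSol lam g) : g 0 = 0 := hg.2.2.2.1

theorem derIci_zero (hg : IsGSol lam g) : derIci g 0 = -lam := hg.2.2.2.2

theorem neg_le_derIci_add (hg : IsGSol lam g) (hx : x ∈ Ici 0) :
    -lam ≤ derIci g x + 2 * g x := by
  have hmono := mul_exp_le_of_mul_le_hasDerivWithinAt (c := 0)
    (fun t ht => (hg.hasDerivWithinAt_derIci ht).add ((hg.hasDerivWithinAt ht).const_mul 2))
    (fun t _ => by linarith [sq_nonneg (g t)]) hx
  simpa [hg.apply_zero, hg.derIci_zero] using hmono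

theorem neg_half_lt (hg : IsGSol lam g) (hlam : 0 < lam) (hx : x ∈ Ici 0) :
    -(lam / 2) < g x := by
  have hcmp := mul_exp_le_of_mul_le_hasDerivWithinAt (c := -2)
    (fun t ht => (hg.hasDerivWithinAt ht).add_const (lam / 2))
    (fun t ht => by linarith [hg.neg_le_derIci_add ht]) hx
  rw [hg.apply_zero, zero_add] at hcmp
  have : 0 < lam / 2 * Real.exp (-2 * (x - 0)) := by positivity
  linarith

/-- With `h x = exp x * g x` the equation reads `h'' = (1 + g) h`, so `h * h'` is nondecreasing; the
quantity below is `exp (-2 x) * h * h'`. -/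
theorem mul_add_derIci_nonneg (hg : IsGSol lam g) (hlam : 0 < lam) (hlam' : lam ≤ 2)
    (hx : x ∈ Ici 0) : 0 ≤ g x * (g x + derIci g x) := by
  have hcmp := mul_exp_le_of_mul_le_hasDerivWithinAt (c := -2)
    (fun t ht => (hg.hasDerivWithinAt ht).mul
      ((hg.hasDerivWithinAt ht).add (hg.hasDerivWithinAt_derIci ht)))
    (fun t ht => by
      have hpos : 0 ≤ 1 + g t := by linarith [hg.neg_half_lt hlam ht]
      have : 0 ≤ (g t + derIci g t) ^ 2 + g t ^ 2 * (1 + g t) := by positivity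
      simp only [Pi.mul_apply, Pi.add_apply]
      linarith) hx
  simpa [hg.apply_zero] using hcmp

theorem sq_mul_exp_le (hg : IsGSol lam g) (hlam : 0 < lam) (hlam' : lam ≤ 2) {y z : ℝ}
    (hy : y ∈ Ici 0) (hyz : y ≤ z) : g y ^ 2 * Real.exp (-2 * (z - y)) ≤ g z ^ 2 := by
  have hsub : Ici y ⊆ Ici 0 := Ici_subset_Ici.2 hy
  refine mul_exp_le_of_mul_le_hasDerivWithinAt (y := fun t => g t ^ 2)
    (fun t ht => ((hg.hasDerivWithinAt (hsub ht)).mono hsub).pow 2) (fun t ht => ?_) hyz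
  norm_num
  linarith [hg.mul_add_derIci_nonneg hlam hlam' (hsub ht)]

theorem eventually_neg (hg : IsGSol lam g) (hlam : 0 < lam) : ∀ᶠ y in 𝓝[>] 0, g y < 0 := by
  have hd : HasDerivWithinAt g (-lam) (Ioi 0) 0 :=
    hg.derIci_zero ▸ (hg.hasDerivWithinAt self_mem_Ici).Ioi_of_Ici
  filter_upwards [hd.limsup_slope_le' self_notMem_Ioi (neg_lt_zero.2 hlam), self_mem_nhdsWithin]
    with y hslope hy
  rw [slope_def_field, hg.apply_zero, sub_zero, sub_zero] at hslope
  simpa using (div_lt_iff₀ (mem_Ioi.1 hy)).1 hslope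

theorem neg_of_pos (hg : IsGSol lam g) (hlam : 0 < lam) (hlam' : lam ≤ 2) (hx : 0 < x) :
    g x < 0 := by
  obtain ⟨y, hgy, hy, hyx⟩ := ((hg.eventually_neg hlam).and (Ioo_mem_nhdsGT hx)).exists
  by_contra! hgx
  obtain ⟨z, hz, hgz⟩ := intermediate_value_Icc hyx.le
    (hg.1.continuousOn.mono fun t ht => hy.le.trans ht.1) ⟨hgy.le, hgx⟩
  have hle := hg.sq_mul_exp_le hlam hlam' hy.le hz.1
  rw [hgz] at hle
  have : 0 < g y ^ 2 * Real.exp (-2 * (z - y)) := mul_pos (sq_pos_of_neg hgy) (Real.exp_pos _)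
  linarith

theorem nonpos (hg : IsGSol lam g) (hlam : 0 < lam) (hlam' : lam ≤ 2) (hx : x ∈ Ici 0) :
    g x ≤ 0 := by
  rcases (mem_Ici.1 hx).eq_or_lt with rfl | hpos
  · exact hg.apply_zero.le
  · exact (hg.neg_of_pos hlam hlam' hpos).le

theorem derIci_lt (hg : IsGSol lam g) (hlam : 0 < lam) (hlam' : lam ≤ 2) (hx : x ∈ Ici 0) :
    derIci g x < -(lam / 2 * g x) := by
  have hcmp := mul_exp_le_of_mul_le_hasDerivWithinAt (c := -(2 - lam / 2))
    (fun t ht => ((hg.hasDerivWithinAt_derIci ht).add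
      ((hg.hasDerivWithinAt ht).const_mul (lam / 2))).neg)
    (fun t ht => by
      have hneg := hg.nonpos hlam hlam' ht
      have hgap : 0 ≤ g t + lam / 2 * (2 - lam / 2) := by
        nlinarith [hg.neg_half_lt hlam ht]
      have hprod := mul_nonpos_of_nonpos_of_nonneg hneg hgap
      simp only [Pi.neg_apply, Pi.add_apply]
      linarith) hx
  simp only [Pi.neg_apply, Pi.add_apply, hg.apply_zero, hg.derIci_zero] at hcmp
  have := mul_pos hlam (Real.exp_pos (-(2 - lam / 2) * (x - 0)))
  linarith

theorem isReciprocalSystem (hg : IsGSol lam g) (hlam : 0 < lam) (hlam' : lam < 2) :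
    IsReciprocalSystem (fun x => -1 / g x) fun x => derIci g x / g x ^ 2 := by
  have hneg : ∀ᶠ x in atTop, g x < 0 :=
    (eventually_gt_atTop 0).mono fun x hx => hg.neg_of_pos hlam hlam'.le hx
  have hd : ∀ᶠ x in atTop, HasDerivAt g (derIci g x) x :=
    (eventually_gt_atTop 0).mono fun x hx =>
      (hg.hasDerivWithinAt hx.le).hasDerivAt (Ici_mem_nhds hx)
  refine ⟨hneg.mono fun x hx => div_pos_of_neg_of_neg neg_one_lt_zero hx, ?_, ?_,
    lam / 2, by linarith, ?_⟩
  · filter_upwards [hneg, hd] with x hx hdx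
    exact ((hasDerivAt_const x (-1)).div hdx hx.ne).congr_deriv (by ring)
  · filter_upwards [hneg, hd, eventually_gt_atTop 0] with x hx hdx hx0
    have hd2 := (hg.hasDerivWithinAt_derIci hx0.le).hasDerivAt (Ici_mem_nhds hx0)
    refine (hd2.div (hdx.pow 2) (pow_ne_zero 2 hx.ne)).congr_deriv ?_
    have := hx.ne
    simp only [Pi.pow_apply]
    field_simp
    ring
  · filter_upwards [hneg, eventually_gt_atTop 0] with x hx hx0
    have hlt := hg.derIci_lt hlam hlam'.le hx0.le
    calc derIci g x / g x ^ 2 ≤ -(lam / 2 * g x) / g x ^ 2 := by gcongr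
      _ = lam / 2 * (-1 / g x) := by have := hx.ne; field_simp

end IsGSol

theorem gLambda_second_order_asymptotics_general (lam : ℝ) (h1 : 0 < lam) (h2 : lam < 2)
    (g : ℝ → ℝ) (hg : IsGSol lam g) :
    ∃ C : ℝ,
      ((fun x => g x - (-2 / x + (2 * Real.log x + C) / x ^ 2)) =o[Filter.atTop]
        fun x => 1 / x ^ 2) ∧
      ((fun x => derIci g x - (2 / x ^ 2 - (4 * Real.log x + 2 * C - 2) / x ^ 3))
        =o[Filter.atTop] fun x => 1 / x ^ 3) := by
  have hsys := hg.isReciprocalSystem h1 h2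
  obtain ⟨K, hK⟩ := hsys.exists_tendsto_sub_log
  refine ⟨4 * K, (hsys.isLittleO_neg_one_div hK).congr_left fun x => ?_,
    (hsys.isLittleO_rate_div_sq hK).congr' ?_ .rfl⟩
  · rw [div_div_cancel₀ (by norm_num)]
  · filter_upwards [eventually_gt_atTop 0] with x hx
    have := (hg.neg_of_pos h1 h2.le hx).ne
    field_simp

/-- Second-order asymptotics of `g_λ` for `λ ∈ (0,1)`: there is a constant
`C_λ` such that `g_λ(x) = -2/x + (2 log x + C_λ)/x² + o(1/x²)` and
`g_λ'(x) = 2/x² - (4 log x + 2C_λ - 2)/x³ + o(1/x³)` as `x → ∞`. -/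
theorem gLambda_second_order_asymptotics (lam : ℝ) (h1 : 0 < lam) (h2 : lam < 1)
    (g : ℝ → ℝ) (hg : IsGSol lam g) :
    ∃ C : ℝ,
      ((fun x => g x - (-2 / x + (2 * Real.log x + C) / x ^ 2)) =o[Filter.atTop]
        fun x => 1 / x ^ 2) ∧
      ((fun x => derIci g x - (2 / x ^ 2 - (4 * Real.log x + 2 * C - 2) / x ^ 3))
        =o[Filter.atTop] fun x => 1 / x ^ 3) :=
  gLambda_second_order_asymptotics_general lam h1 (h2.trans one_lt_two) g hg
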